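/- Let α be a partition with all parts at least 2 and overlapping partition p. If ℓ(p) ≤ 1 then [R_α^p] = [α, (|α|−p_1, p_1)]. If ℓ(p) ≥ 2, then for every partition ν ∈ [α, (|α|−p_1, p_1)], ν does not belong to the Schur support [R_α^p] if and only if there exists i ∈ {1,…,ℓ(p)−1} such that ν_{i+1} ≥ ϱ_i = Σ_{q=i+1}^{ℓ(α)} α_q − p_{i+1} + 1; equivalently, ν_{i+1} exceeds the total number of columns of the last ℓ(α)−i rows of R_α^p for some such i. -/

import Mathlib

namespace RibbonSupport

/-- A partition: a weakly decreasing list of positive integers. -/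
def IsPartition (a : List ℕ) : Prop := a.Pairwise (· ≥ ·) ∧ ∀ x ∈ a, 0 < x

/-- All parts of the list are at least `m`. -/
def PartsGE (a : List ℕ) (m : ℕ) : Prop := ∀ x ∈ a, m ≤ x

/-- Dominance order `lam ⪯ mu` on partitions of the same size. -/
def DomLE (lam mu : List ℕ) : Prop :=
  lam.sum = mu.sum ∧ ∀ i, (lam.take i).sum ≤ (mu.take i).sum

/-- The number of nonzero parts. -/
def lenp (p : List ℕ) : ℕ := p.countP (fun x => decide (x ≠ 0))

/-- `p` is an overlapping partition for the monotone ribbon with row lengths `a`: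
`p` has the same length as `a`, its last entry is `0`, and consecutive entries
decrease by `0` or `1`. -/
def IsOverlapSeq (a p : List ℕ) : Prop :=
  p.length = a.length ∧ p.getD (a.length - 1) 0 = 0 ∧
    ∀ i, i + 1 < a.length →
      p.getD i 0 = p.getD (i + 1) 0 ∨ p.getD i 0 = p.getD (i + 1) 0 + 1

/-- Rows `i` and `i+1` (0-based, top to bottom) of `R_a^p` overlap
(share exactly one column) exactly when `p_i = p_{i+1} + 1`. -/
def ovOf (p : List ℕ) : ℕ → Bool := fun i => decide (p.getD i 0 = p.getD (i + 1) 0 + 1)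

def rowOffset (a : List ℕ) (i : ℕ) : ℕ := (a.take i).sum

/-- `w` is the reading word (rows right-to-left, top to bottom) of a semistandard filling of
the ribbon with row lengths `a` (top to bottom) in which consecutive rows `i`, `i+1` share
exactly one column when `ov i = true` and no column otherwise.  Semistandardness amounts to:
within each row block the word is weakly decreasing (rows weakly increase left to right), and
at each overlapping gap the word strictly increases (columns strictly increase downwards). -/
def IsRibbonWord (a : List ℕ) (ov : ℕ → Bool) (w : List ℕ) : Prop :=
  w.length = a.sum ∧
  (∀ i j, i < a.length → j + 1 < a.getD i 0 →
    w.getD (rowOffset a i + j + 1) 0 ≤ w.getD (rowOffset a i + j) 0) ∧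
  (∀ i, i + 1 < a.length → ov i = true →
    w.getD (rowOffset a (i + 1) - 1) 0 < w.getD (rowOffset a (i + 1)) 0)

/-- Yamanouchi (lattice) word: each prefix has at least as many letters `j` as `j+1`. -/
def IsYam (w : List ℕ) : Prop := ∀ k j, (w.take k).count (j + 2) ≤ (w.take k).count (j + 1)

/-- The word `w` has content `nu` (and only positive letters). -/
def HasContent (w : List ℕ) (nu : List ℕ) : Prop :=
  (∀ j, w.count (j + 1) = nu.getD j 0) ∧ w.count 0 = 0

/-- There is an LR filling of the ribbon `(a, ov)` with content `nu`. -/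
def InSupportOv (a : List ℕ) (ov : ℕ → Bool) (nu : List ℕ) : Prop :=
  ∃ w : List ℕ, IsRibbonWord a ov w ∧ IsYam w ∧ HasContent w nu

/-- `nu` is in the Schur support of the monotone ribbon `R_a^p`. -/
def InSupport (a p nu : List ℕ) : Prop := InSupportOv a (ovOf p) nu

/-- `nu` is in the Schur support of the connected ribbon `R_a`. -/
def InSupportConn (a nu : List ℕ) : Prop := InSupportOv a (fun _ => true) nu

/-- `nu` belongs to the Schur interval `[a, (|a| - p₁, p₁)]` in dominance order. -/
def InInterval (a p nu : List ℕ) : Prop :=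
  DomLE a nu ∧ DomLE nu [a.sum - p.getD 0 0, p.getD 0 0]

/-- The Schur support of `R_a^p`, as a set of partitions. -/
def SupportSet (a p : List ℕ) : Set (List ℕ) := {nu | IsPartition nu ∧ InSupport a p nu}

/-- The Schur interval of `R_a^p`, as a set of partitions. -/
def IntervalSet (a p : List ℕ) : Set (List ℕ) := {nu | IsPartition nu ∧ InInterval a p nu}

/-- `R_a^p` has full Schur support. -/
def FullSupport (a p : List ℕ) : Prop := SupportSet a p = IntervalSet a p

/-- The Schur support of the connected ribbon `R_a`, as a set of partitions. -/
def SupportSetConn (a : List ℕ) : Set (List ℕ) := {nu | IsPartition nu ∧ InSupportConn a nu}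

/-- `ϱ_i` (1-based `i`): `Σ_{q=i+1}^{ℓ(a)} a_q − p_{i+1} + 1`. -/
def rho (a p : List ℕ) (i : ℕ) : ℕ := (a.drop i).sum + 1 - p.getD i 0

/-- Entry `j` (1-based) of the `i`-witness vector: `[ϱ_i − a_j]₊`. -/
def wit (a p : List ℕ) (i j : ℕ) : ℕ := rho a p i - a.getD (j - 1) 0

/-- Size of the `i`-witness vector. -/
def witSize (a p : List ℕ) (i : ℕ) : ℕ := ∑ j ∈ Finset.Icc 1 i, wit a p i j

/-! ### Tableaux -/

/-- Cells (0-based `(row, column)`) of the Young diagram of `lam`. -/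
def cells (lam : List ℕ) : Finset (ℕ × ℕ) :=
  (Finset.range lam.length ×ˢ Finset.range (lam.sum + 1)).filter
    (fun x => x.2 < lam.getD x.1 0)

/-- `T` is a semistandard Young tableau of shape `lam` and content `al`
(normalized to vanish off the diagram). -/
def IsTab (lam al : List ℕ) (T : ℕ × ℕ → ℕ) : Prop :=
  (∀ x, x ∉ cells lam → T x = 0) ∧
  (∀ x ∈ cells lam, 1 ≤ T x) ∧
  (∀ i c, (i, c + 1) ∈ cells lam → T (i, c) ≤ T (i, c + 1)) ∧
  (∀ i c, (i + 1, c) ∈ cells lam → T (i, c) < T (i + 1, c)) ∧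
  (∀ k, ((cells lam).filter (fun x => T x = k + 1)).card = al.getD k 0)

/-- Standardization of a tableau: entries are renumbered `1, …, N` in increasing order of
value, entries of equal value being numbered from southwest to northeast (by column). -/
def stdz (lam : List ℕ) (T : ℕ × ℕ → ℕ) : ℕ × ℕ → ℕ := fun x =>
  if x ∈ cells lam then
    ((cells lam).filter (fun y => T y < T x ∨ (T y = T x ∧ y.2 < x.2))).card + 1
  else 0

/-- `n` is a descent of the standard tableau `U`: the entry `n+1` lies in a strictly
lower row than the entry `n`. -/
def IsDescent (lam : List ℕ) (U : ℕ × ℕ → ℕ) (n : ℕ) : Prop :=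
  ∃ x ∈ cells lam, ∃ y ∈ cells lam, U x = n ∧ U y = n + 1 ∧ x.1 < y.1

/-- `S(al)`: the set of proper partial sums of the composition `al`. -/
def Sset (al : List ℕ) : Set ℕ := {n | ∃ k, 0 < k ∧ k < al.length ∧ n = (al.take k).sum}

/-- `s ∈ D(T)`: some entry `s+1` of `T` lies in a strictly lower row than some entry `s`. -/
def TabDescent (lam : List ℕ) (T : ℕ × ℕ → ℕ) (s : ℕ) : Prop :=
  ∃ x ∈ cells lam, ∃ y ∈ cells lam, T x = s ∧ T y = s + 1 ∧ x.1 < y.1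

/-- The word `w_{T̂}` of `T`: its `u`-th letter (1-based) is the 1-based row index of the
entry `u` of the standardization `T̂` of `T`. -/
def wordOf (lam : List ℕ) (T : ℕ × ℕ → ℕ) : List ℕ :=
  (List.range lam.sum).map fun n =>
    ∑ x ∈ (cells lam).filter (fun x => stdz lam T x = n + 1), (x.1 + 1)

/-- `j ∈ {2, …, ℓ(al)}` is a critical number of `T ∈ Tab(lam, al)`:
`w_{α_1+⋯+α_{j-1}} = w_{α_1+⋯+α_{j-1}+1}` in the word of `T`. -/
def CriticalNum (lam al : List ℕ) (T : ℕ × ℕ → ℕ) (j : ℕ) : Prop :=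
  2 ≤ j ∧ j ≤ al.length ∧
    (wordOf lam T).getD ((al.take (j - 1)).sum - 1) 0 =
      (wordOf lam T).getD ((al.take (j - 1)).sum) 0

/-- `j ∈ {2, …, ℓ(al)}` is a negligible critical number of `T`:
`w_{α_1+⋯+α_{j-1}} > w_{α_1+⋯+α_{j-1}+1}` in the word of `T`. -/
def NegligibleNum (lam al : List ℕ) (T : ℕ × ℕ → ℕ) (j : ℕ) : Prop :=
  2 ≤ j ∧ j ≤ al.length ∧
    (wordOf lam T).getD ((al.take (j - 1)).sum) 0 <
      (wordOf lam T).getD ((al.take (j - 1)).sum - 1) 0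

/-- The overlapping partition of the ribbon encoded by its gap pattern `b`
(`b j = true` iff rows `j` and `j+1`, 0-based, overlap). -/
def povOf (b : List Bool) : List ℕ :=
  (List.range (b.length + 1)).map fun i => (b.drop i).count true

/-! ### Connected ribbons with rows in arbitrary order -/

/-- Starting column (0-based) of row `i` of the connected ribbon with row lengths `b`. -/
def startConn (b : List ℕ) (i : ℕ) : ℕ := (b.drop (i + 1)).sum + (i + 1) - b.length

/-- Number of columns of the connected ribbon with row lengths `b`. -/
def ncols (b : List ℕ) : ℕ := b.sum + 1 - b.length

/-- Length of column `c` of the connected ribbon with row lengths `b`. -/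
def colLen (b : List ℕ) (c : ℕ) : ℕ :=
  ((Finset.range b.length).filter
    (fun i => startConn b i ≤ c ∧ c < startConn b i + b.getD i 0)).card

/-- Deletion rank of row `j`: the number of rows deleted strictly before row `j` when one
repeatedly deletes a longest remaining row in highest (most northern) position. -/
def delRank (g : List ℕ) (j : ℕ) : ℕ :=
  ((Finset.range g.length).filter
    (fun j' => g.getD j 0 < g.getD j' 0 ∨ (g.getD j' 0 = g.getD j 0 ∧ j' < j))).card

/-- The overlapping partition of the connected ribbon with row lengths `g`:
its `(d+1)`-st entry is the number of length-two columns of the ribbon remaining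
after deleting `d` rows as above, i.e. the number of adjacent pairs of surviving rows. -/
def ppiList (g : List ℕ) : List ℕ :=
  (List.range g.length).map fun d =>
    ((Finset.range (g.length - 1)).filter
      (fun j => d ≤ delRank g j ∧ d ≤ delRank g (j + 1))).card

/-!
A partition `ν` is in the support of `R_a^p` iff it dominates `a` and each `ν_{i+1}` is at most
the number of columns of the rows `i + 1, …, ℓ(a)`, which is `Σ_{q>i} a_q - p_{i+1}`.

Necessity: in an LR filling the letter `i + 1` does not occur before row `i + 1`, and it occurs at
most once in each column.

Sufficiency: induct on the number of rows, removing from `ν` a horizontal strip that becomes the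
content of the last row. The strip takes the bottom boxes of the leftmost columns of `ν`, except
that a row of `ν` too long for the columns of the other rows has to give up its excess boxes; by
dominance there is at most one such row. When the last row of the ribbon overlaps the one above
it, the strip must contain a box of the bottom row of `ν`, and the last letter of the shorter
filling must be smaller than the corresponding letter; this is why the induction also controls
that last letter.

The bound at `i = 0` says that `ν` lies below `(|a| - p₁, p₁)`, and for `i ≥ ℓ(p)`, where
`p_{i+1} = 0`, dominance implies the bound. So inside the Schur interval only
`1 ≤ i < ℓ(p)` matter.
-/

section Strips

open Finset

variable {a p ν t : ℕ → ℕ} {N L b m i j k T : ℕ}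

theorem sum_range_add_mul_sub_le {f : ℕ → ℕ} {c : ℕ} (hjk : j ≤ k)
    (hc : ∀ i, j ≤ i → i < k → c ≤ f i) :
    ∑ i ∈ range j, f i + (k - j) * c ≤ ∑ i ∈ range k, f i := by
  rw [← sum_range_add_sum_Ico f hjk]
  have h := card_nsmul_le_sum (Ico j k) (fun i => f i) c fun i hi =>
    hc i (mem_Ico.1 hi).1 (mem_Ico.1 hi).2
  rw [Nat.card_Ico, smul_eq_mul] at h
  omega

/-- Row lengths `a` and overlapping partition `p` of a monotone ribbon with `N` rows, both
extended to functions on `ℕ` (by zero, for the lists of the theorem). -/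
structure IsMonotoneRibbon (a p : ℕ → ℕ) (N : ℕ) : Prop where
  antitone : Antitone a
  two_le : ∀ j < N, 2 ≤ a j
  step : ∀ j, p j = p (j + 1) ∨ p j = p (j + 1) + 1

namespace IsMonotoneRibbon

theorem overlap_antitone (hR : IsMonotoneRibbon a p N) : Antitone p :=
  antitone_nat_of_succ_le fun j => by have := hR.step j; omega

theorem overlap_le_add_sub (hR : IsMonotoneRibbon a p N) (hjk : j ≤ k) :
    p j ≤ p k + (k - j) := by
  induction k, hjk using Nat.le_induction with
  | base => omega
  | succ k hjk ih => have := hR.step k; omega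

theorem sum_range_add_two_mul_le (hR : IsMonotoneRibbon a p N) (hjk : j ≤ k) (hk : k ≤ N) :
    ∑ i ∈ range j, a i + (k - j) * 2 ≤ ∑ i ∈ range k, a i :=
  sum_range_add_mul_sub_le hjk fun i _ hi => hR.two_le i (hi.trans_le hk)

end IsMonotoneRibbon

/-- The conditions, on a partition `ν` with `b` nonzero parts, that turn out to characterize
the contents of LR fillings of the first `n` rows of a monotone ribbon: `ν` dominates the row
lengths, and `ν j` is at most the number of columns of the rows `j, …, n - 1`.
Subtractions are cleared: the rows `j, …, n - 1` have
`∑ k ∈ range n, a k - ∑ k ∈ range j, a k` boxes and `p j - p (n - 1)` overlaps. -/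
structure IsAdmissible (a p : ℕ → ℕ) (n b : ℕ) (ν : ℕ → ℕ) : Prop where
  antitone : Antitone ν
  pos_iff : ∀ j, 0 < ν j ↔ j < b
  length_le : b ≤ n
  sum_eq : ∑ j ∈ range n, ν j = ∑ j ∈ range n, a j
  dom : ∀ j ≤ n, ∑ k ∈ range j, a k ≤ ∑ k ∈ range j, ν k
  col : ∀ j < b, ν j + p j + ∑ k ∈ range j, a k ≤ ∑ k ∈ range n, a k + p (n - 1)

/-- Additional conditions on an admissible `ν` under which some filling has, in its last row,
a letter smaller than `b`, so that an overlapping row ending in the letter `b` can follow. -/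
structure HasSlack (a p : ℕ → ℕ) (n b : ℕ) (ν : ℕ → ℕ) : Prop where
  two_le : 2 ≤ b
  lt : ν (b - 1) < ν (b - 2)
  col_lt : ν (b - 1) + p (b - 1) + ∑ k ∈ range (b - 1), a k <
    ∑ k ∈ range n, a k + p (n - 1)

/-- Row `i` of `ν` is longer than the number of columns of the rows `i, …, L - 1`, so that
the letter `i + 1` has to occur in row `L` as well. -/
def IsHeavy (a p : ℕ → ℕ) (L : ℕ) (ν : ℕ → ℕ) (i : ℕ) : Prop :=
  ∑ k ∈ range L, a k + p (L - 1) < ν i + p i + ∑ k ∈ range i, a k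

namespace IsAdmissible

theorem eq_zero_of_le (h : IsAdmissible a p L b ν) (hj : b ≤ j) : ν j = 0 := by
  have := (h.pos_iff j).not.2 hj.not_gt
  omega

theorem sum_range_length (h : IsAdmissible a p L b ν) :
    ∑ j ∈ range b, ν j = ∑ j ∈ range L, a j := by
  rw [← h.sum_eq]
  exact sum_subset (range_subset_range.2 h.length_le) fun j _ hj =>
    h.eq_zero_of_le (by simpa using hj)

theorem sum_range_le (h : IsAdmissible a p L b ν) (hj : j ≤ L) :
    ∑ k ∈ range j, ν k ≤ ∑ k ∈ range L, a k :=
  h.sum_eq ▸ sum_le_sum_of_subset (range_subset_range.2 hj)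

theorem sum_range_add_part_add_le (h : IsAdmissible a p L b ν) (hjk : j < k) (hk : k ≤ b) :
    ∑ i ∈ range j, a i + ν j + (k - (j + 1)) ≤ ∑ i ∈ range k, ν i := by
  have hdom := h.dom j (by have := h.length_le; omega)
  have htail := sum_range_add_mul_sub_le (f := ν) (c := 1) hjk
    fun i _ hi => (h.pos_iff i).2 (by omega)
  rw [sum_range_succ] at htail
  omega

theorem add_sub_le_of_isHeavy (hR : IsMonotoneRibbon a p N) (hL : L < N)
    (h : IsAdmissible a p (L + 1) b ν) (hi : i + 1 < b) (hν : IsHeavy a p L ν i) :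
    a L + (L - i) ≤ ν i := by
  have hiL : i + 1 ≤ L := by have := h.length_le; omega
  have hsum := hR.sum_range_add_two_mul_le hiL hL.le
  have hp := hR.overlap_le_add_sub (show i ≤ L - 1 by omega)
  have ha := hR.antitone (show i ≤ L by omega)
  rw [sum_range_succ] at hsum
  unfold IsHeavy at hν
  omega

/-- If both were heavy, the rows `j, …, i + 1` of `ν` would hold more boxes than dominance
leaves for all rows from `j` on. -/
theorem not_isHeavy_of_lt (hR : IsMonotoneRibbon a p N) (hL : L < N)
    (h : IsAdmissible a p (L + 1) b ν) (hji : j < i) (hi : i + 1 < b)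
    (hνi : IsHeavy a p L ν i) : ¬ IsHeavy a p L ν j := by
  intro hνj
  have hbL := h.length_le
  have hνi' := h.add_sub_le_of_isHeavy hR hL hi hνi
  have hsum := h.sum_range_add_part_add_le hji (show i ≤ b by omega)
  have htotal := h.sum_range_le (show i + 1 + 1 ≤ L + 1 by omega)
  have hpos := (h.pos_iff (i + 1)).2 hi
  have hp := hR.overlap_le_add_sub (show j ≤ L - 1 by omega)
  rw [sum_range_succ ν, sum_range_succ ν, sum_range_succ a] at htotal
  unfold IsHeavy at hνj
  omega

theorem isHeavy_unique (hR : IsMonotoneRibbon a p N) (hL : L < N)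
    (h : IsAdmissible a p (L + 1) b ν) (hi : i + 1 < b) (hj : j + 1 < b)
    (hνi : IsHeavy a p L ν i) (hνj : IsHeavy a p L ν j) : j = i := by
  by_contra hne
  rcases lt_or_gt_of_ne hne with hlt | hlt
  · exact h.not_isHeavy_of_lt hR hL hlt hi hνi hνj
  · exact h.not_isHeavy_of_lt hR hL hlt hj hνj hνi

end IsAdmissible

/-- A horizontal strip of size `m` in the Young diagram of `ν`, encoded by the numbers `t j` of
its boxes in the rows from `j` on. -/
structure IsHorizontalStrip (ν : ℕ → ℕ) (m : ℕ) (t : ℕ → ℕ) : Prop where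
  zero_eq : t 0 = m
  succ_le : ∀ j, t (j + 1) ≤ t j
  le : ∀ j, t j ≤ ν j
  part_succ_add_le : ∀ j, ν (j + 1) + t j ≤ ν j + t (j + 1)

/-- The strip of size `m` that consists of the bottom boxes of the `T` leftmost columns, as far
as they lie below row `i`, and of boxes of row `i`. -/
def stripTail (ν : ℕ → ℕ) (m i T : ℕ) : ℕ → ℕ := fun j => if j ≤ i then m else min T (ν j)

theorem stripTail_of_le (hj : j ≤ i) : stripTail ν m i T j = m := if_pos hj

theorem stripTail_of_lt (hj : i < j) : stripTail ν m i T j = min T (ν j) := if_neg hj.not_ge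

theorem isHorizontalStrip_stripTail (hν : Antitone ν) (hT : T ≤ m) (hm : m ≤ ν i)
    (hgap : ν (i + 1) + m ≤ ν i + min T (ν (i + 1))) :
    IsHorizontalStrip ν m (stripTail ν m i T) where
  zero_eq := stripTail_of_le i.zero_le
  succ_le j := by
    have := hν (Nat.le_add_right j 1)
    unfold stripTail
    split_ifs <;> omega
  le j := by
    unfold stripTail
    split_ifs with hj
    · exact hm.trans (hν hj)
    · exact min_le_right _ _
  part_succ_add_le j := by
    have hνj := hν (Nat.le_add_right j 1)
    rcases lt_trichotomy j i with hj | rfl | hj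
    · rw [stripTail_of_le hj.le, stripTail_of_le hj]
      exact Nat.add_le_add_right hνj m
    · rwa [stripTail_of_le le_rfl, stripTail_of_lt j.lt_add_one]
    · rw [stripTail_of_lt hj, stripTail_of_lt (hj.trans j.lt_add_one)]
      omega

/-- A horizontal strip of size `a L` whose removal from an admissible `ν` leaves an admissible
partition for the first `L` rows, to which row `L` can be appended. -/
structure IsReducingStrip (a p : ℕ → ℕ) (L b : ℕ) (ν t : ℕ → ℕ) : Prop
    extends IsHorizontalStrip ν (a L) t where
  dom : ∀ j ≤ L, ∑ k ∈ range j, a k + a L ≤ ∑ k ∈ range j, ν k + t j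
  bot_pos : p (L - 1) = p L + 1 → 0 < t (b - 1)
  col : ∀ j, j + 1 < b →
    ν j + t (j + 1) + p j + ∑ k ∈ range j, a k ≤ ∑ k ∈ range L, a k + p (L - 1) + t j
  col_bot : t (b - 1) < ν (b - 1) →
    ν (b - 1) + p (b - 1) + ∑ k ∈ range (b - 1), a k ≤ ∑ k ∈ range L, a k + p L + t (b - 1)

namespace IsAdmissible

theorem le_part_zero (hR : IsMonotoneRibbon a p N) (h : IsAdmissible a p (L + 1) b ν) :
    a L ≤ ν 0 := by
  have := h.dom 1 (by omega)
  have := hR.antitone L.zero_le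
  simp only [sum_range_one] at *
  omega

theorem pos (hR : IsMonotoneRibbon a p N) (hL : L < N) (h : IsAdmissible a p (L + 1) b ν) :
    0 < b :=
  (h.pos_iff 0).1 (by have := h.le_part_zero hR; have := hR.two_le L hL; omega)

theorem isReducingStrip_stripTail (hR : IsMonotoneRibbon a p N) (hL : L < N)
    (h : IsAdmissible a p (L + 1) b ν) (hT : T ≤ a L)
    (hstrip : IsHorizontalStrip ν (a L) (stripTail ν (a L) i T))
    (hdom : ∀ j ≤ L, i < j → T < ν j →
      ∑ k ∈ range j, a k + a L ≤ ∑ k ∈ range j, ν k + T)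
    (hpos : p (L - 1) = p L + 1 → 0 < T)
    (hlight : ∀ j, j + 1 < b → j ≠ i → ¬ IsHeavy a p L ν j)
    (hrow : i + 1 < b →
      ν i + T + p i + ∑ k ∈ range i, a k ≤ ∑ k ∈ range L, a k + p (L - 1) + a L)
    (hbot : T < ν (b - 1) →
      ν (b - 1) + p (b - 1) + ∑ k ∈ range (b - 1), a k ≤ ∑ k ∈ range L, a k + p L + T) :
    IsReducingStrip a p L b ν (stripTail ν (a L) i T) where
  toIsHorizontalStrip := hstrip
  dom j hj := by
    have hle := h.dom (j + 1) (by omega)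
    rw [sum_range_succ, sum_range_succ] at hle
    rcases le_or_gt j i with hji | hij
    · rw [stripTail_of_le hji]
      exact Nat.add_le_add_right (h.dom j (by omega)) _
    · rw [stripTail_of_lt hij]
      have := hR.antitone hj
      have := hdom j hj hij
      omega
  bot_pos hov := by
    have hb := h.pos hR hL
    have := (h.pos_iff (b - 1)).2 (by omega)
    have := hpos hov
    unfold stripTail
    split_ifs <;> omega
  col j hj := by
    rcases eq_or_ne j i with rfl | hne
    · have := hrow hj
      rw [stripTail_of_le le_rfl, stripTail_of_lt j.lt_add_one]
      omega
    · have hl := hlight j hj hne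
      have := hstrip.succ_le j
      unfold IsHeavy at hl
      omega
  col_bot hlt := by
    unfold stripTail at hlt ⊢
    split_ifs at hlt ⊢ <;> omega

/-- Row `i` gives up exactly the boxes that do not fit above row `L`; they are removed together
with the bottom boxes of the leftmost columns. -/
theorem isReducingStrip_of_isHeavy (hR : IsMonotoneRibbon a p N) (hL : L < N)
    (h : IsAdmissible a p (L + 1) b ν) (hi : i + 1 < b) (hν : IsHeavy a p L ν i) :
    IsReducingStrip a p L b ν (stripTail ν (a L) i
      (∑ k ∈ range (L + 1), a k + p (L - 1) - (ν i + p i + ∑ k ∈ range i, a k))) := by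
  have hbL := h.length_le
  have hνi := h.add_sub_le_of_isHeavy hR hL hi hν
  have hpi := hR.overlap_le_add_sub (show i ≤ L - 1 by omega)
  have hlow : ∀ j, i < j → j < b →
      ∑ k ∈ range i, a k + ν i + (j - (i + 1)) ≤ ∑ k ∈ range j, ν k :=
    fun j hij hj => h.sum_range_add_part_add_le hij hj.le
  have htotal : ∀ j < b, ∑ k ∈ range j, ν k + ν j ≤ ∑ k ∈ range (L + 1), a k := fun j hj =>
    sum_range_succ ν j ▸ h.sum_range_le (by omega)
  have hp := hR.overlap_antitone (L.sub_le 1)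
  have hcol := h.col i (by omega)
  have hunique := fun j hj => mt (h.isHeavy_unique hR hL hi (j := j) hj hν)
  unfold IsHeavy at hν
  rw [add_tsub_cancel_right] at hcol
  rw [sum_range_succ] at hcol htotal ⊢
  refine h.isReducingStrip_stripTail hR hL (by omega)
    (isHorizontalStrip_stripTail h.antitone (by omega) (by omega) ?_) ?_ (by omega)
    hunique (by omega) ?_
  · have := hlow (i + 1) (by omega) hi
    have := htotal (i + 1) hi
    omega
  · intro j hjL hij hTj
    have := hlow j hij ((h.pos_iff j).1 (by omega))
    have := hR.sum_range_add_two_mul_le hjL hL.le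
    omega
  · intro _
    have := hlow (b - 1) (by omega) (by omega)
    have := htotal (b - 1) (by omega)
    have := hR.sum_range_add_two_mul_le (show b - 1 ≤ L by omega) hL.le
    have := hR.overlap_le_add_sub (show b - 1 ≤ L by omega)
    omega

theorem isReducingStrip_of_hasSlack (hR : IsMonotoneRibbon a p N) (hL : L < N)
    (h : IsAdmissible a p (L + 1) b ν) (hs : HasSlack a p (L + 1) b ν)
    (hle : a L ≤ ν (b - 1)) (hlight : ∀ j, j + 1 < b → ¬ IsHeavy a p L ν j) :
    IsReducingStrip a p L b ν (stripTail ν (a L) (b - 2) (a L - 1)) := by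
  obtain ⟨hb, hlt, hcol⟩ := hs
  have hbL := h.length_le
  have haL := hR.two_le L hL
  have hp := hR.overlap_antitone (show b - 1 ≤ L by omega)
  have hsucc : b - 2 + 1 = b - 1 := by omega
  have htotal : ∑ k ∈ range (b - 1), ν k + ν (b - 1) = ∑ k ∈ range L, a k + a L := by
    rw [← sum_range_succ, ← sum_range_succ, show b - 1 + 1 = b by omega, h.sum_range_length]
  rw [add_tsub_cancel_right, sum_range_succ] at hcol
  refine h.isReducingStrip_stripTail hR hL (by omega)
    (isHorizontalStrip_stripTail h.antitone (by omega) (by omega) (by rw [hsucc]; omega)) ?_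
    (by omega) (fun j hj _ => hlight j hj) ?_ (by omega)
  · intro j hjL hbj hTj
    obtain rfl : j = b - 1 := by
      have := (h.pos_iff j).1 (by omega)
      omega
    omega
  · intro hb2
    have hl := hlight (b - 2) hb2
    unfold IsHeavy at hl
    omega

theorem isReducingStrip_leftmost (hR : IsMonotoneRibbon a p N) (hL : L < N)
    (h : IsAdmissible a p (L + 1) b ν) (hlight : ∀ j, j + 1 < b → ¬ IsHeavy a p L ν j) :
    IsReducingStrip a p L b ν (stripTail ν (a L) 0 (a L)) := by
  have haL := hR.two_le L hL
  have hν0 := h.le_part_zero hR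
  have hν1 := h.antitone (Nat.zero_le (0 + 1))
  refine h.isReducingStrip_stripTail hR hL le_rfl
    (isHorizontalStrip_stripTail h.antitone le_rfl hν0 (by omega)) ?_ (by omega)
    (fun j hj _ => hlight j hj) ?_ ?_
  · intro j hj _ _
    exact Nat.add_le_add_right (h.dom j (by omega)) _
  · intro hb
    have hl := hlight 0 hb
    unfold IsHeavy at hl
    omega
  · intro _
    have hcol := h.col (b - 1) (by have := h.pos hR hL; omega)
    rw [add_tsub_cancel_right, sum_range_succ] at hcol
    omega

theorem exists_isReducingStrip (hR : IsMonotoneRibbon a p N) (hL : L < N)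
    (h : IsAdmissible a p (L + 1) b ν) :
    ∃ t, IsReducingStrip a p L b ν t ∧ (HasSlack a p (L + 1) b ν → t (b - 1) < a L) := by
  have haL := hR.two_le L hL
  by_cases hheavy : ∃ i, i + 1 < b ∧ IsHeavy a p L ν i
  · obtain ⟨i, hi, hν⟩ := hheavy
    refine ⟨_, h.isReducingStrip_of_isHeavy hR hL hi hν, fun _ => ?_⟩
    unfold IsHeavy at hν
    rw [stripTail_of_lt (by omega), sum_range_succ]
    omega
  push Not at hheavy
  by_cases hs : HasSlack a p (L + 1) b ν ∧ a L ≤ ν (b - 1)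
  · have := hs.1.two_le
    refine ⟨_, h.isReducingStrip_of_hasSlack hR hL hs.1 hs.2 hheavy, fun _ => ?_⟩
    rw [stripTail_of_lt (by omega)]
    omega
  · refine ⟨_, h.isReducingStrip_leftmost hR hL hheavy, fun hslack => ?_⟩
    have := hslack.two_le
    have : ¬ a L ≤ ν (b - 1) := fun hle => hs ⟨hslack, hle⟩
    rw [stripTail_of_lt (by omega)]
    omega

end IsAdmissible

/-- The row lengths left after removing the horizontal strip `t` from `ν`. -/
def removeStrip (ν t : ℕ → ℕ) : ℕ → ℕ := fun j => ν j + t (j + 1) - t j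

/-- The number of nonzero rows left after removing the strip `t` from a partition `ν` with `b`
nonzero rows: the last row disappears when it is contained in the strip. -/
def remainingLength (ν t : ℕ → ℕ) (b : ℕ) : ℕ := if t (b - 1) < ν (b - 1) then b else b - 1

namespace IsHorizontalStrip

theorem sub_eq_zero (ht : IsHorizontalStrip ν m t) (hj : ν j = 0) : t j - t (j + 1) = 0 := by
  have := ht.le j
  omega

theorem removeStrip_add (ht : IsHorizontalStrip ν m t) (j : ℕ) :
    removeStrip ν t j + t j = ν j + t (j + 1) :=
  Nat.sub_add_cancel ((ht.le j).trans (Nat.le_add_right _ _))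

theorem sum_range_removeStrip_add (ht : IsHorizontalStrip ν m t) (j : ℕ) :
    ∑ k ∈ range j, removeStrip ν t k + m = ∑ k ∈ range j, ν k + t j := by
  induction j with
  | zero => simp [ht.zero_eq]
  | succ j ih =>
    have := ht.removeStrip_add j
    rw [sum_range_succ, sum_range_succ]
    omega

theorem antitone_removeStrip (ht : IsHorizontalStrip ν m t) : Antitone (removeStrip ν t) :=
  antitone_nat_of_succ_le fun j => by
    have := ht.removeStrip_add j
    have := ht.removeStrip_add (j + 1)
    have := ht.part_succ_add_le j
    have := ht.succ_le (j + 1)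
    omega

theorem removeStrip_pos_iff (ht : IsHorizontalStrip ν m t) (hb : 0 < b)
    (hpos : ∀ j, 0 < ν j ↔ j < b) (j : ℕ) :
    0 < removeStrip ν t j ↔ j < remainingLength ν t b := by
  have hj := ht.removeStrip_add j
  have hle := ht.le j
  have hle' := ht.le (j + 1)
  have hpart := ht.part_succ_add_le j
  have hνj := hpos j
  have hνj' := hpos (j + 1)
  unfold remainingLength
  rcases lt_trichotomy (j + 1) b with hjb | rfl | hjb
  · split_ifs <;> omega
  · rw [Nat.add_sub_cancel]
    split_ifs <;> omega
  · split_ifs <;> omega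

end IsHorizontalStrip

namespace IsReducingStrip

theorem isAdmissible_removeStrip (hR : IsMonotoneRibbon a p N) (hL : L < N)
    (h : IsAdmissible a p (L + 1) b ν) (ht : IsReducingStrip a p L b ν t) :
    IsAdmissible a p L (remainingLength ν t b) (removeStrip ν t) where
  antitone := ht.antitone_removeStrip
  pos_iff := ht.removeStrip_pos_iff (h.pos hR hL) h.pos_iff
  length_le := by
    have htotal := h.sum_eq
    have hdom := ht.dom L le_rfl
    have hbL := h.length_le
    rw [sum_range_succ, sum_range_succ] at htotal
    unfold remainingLength
    split_ifs with hlt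
    · by_contra hcon
      obtain rfl : b = L + 1 := by omega
      rw [Nat.add_sub_cancel] at hlt
      omega
    · omega
  sum_eq := by
    have htotal := h.sum_eq
    have hsum := ht.sum_range_removeStrip_add L
    have hdom := ht.dom L le_rfl
    have hle := ht.le L
    rw [sum_range_succ, sum_range_succ] at htotal
    omega
  dom j hj := by
    have := ht.dom j hj
    have := ht.sum_range_removeStrip_add j
    omega
  col j hj := by
    have hadd := ht.removeStrip_add j
    unfold remainingLength at hj
    rcases lt_or_ge (j + 1) b with hjb | hjb
    · have := ht.col j hjb
      omega
    · split_ifs at hj with hlt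
      · obtain rfl : j = b - 1 := by omega
        have := ht.col_bot hlt
        have := ht.le (b - 1 + 1)
        have := h.eq_zero_of_le (show b ≤ b - 1 + 1 by omega)
        have := hR.overlap_antitone (L.sub_le 1)
        omega
      · omega

theorem hasSlack_removeStrip (hR : IsMonotoneRibbon a p N) (hL : L < N)
    (h : IsAdmissible a p (L + 1) b ν) (ht : IsReducingStrip a p L b ν t)
    (hov : p (L - 1) = p L + 1) (hlt : t (b - 1) < ν (b - 1)) :
    HasSlack a p L b (removeStrip ν t) := by
  have hb := h.pos hR hL
  have hcol := ht.col_bot hlt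
  have hadd := ht.removeStrip_add (b - 1)
  have hnext := ht.le (b - 1 + 1)
  rw [h.eq_zero_of_le (show b ≤ b - 1 + 1 by omega)] at hnext
  have hb2 : 2 ≤ b := by
    by_contra hcon
    obtain rfl : b = 1 := by omega
    have htotal := h.sum_range_length
    have hzero := ht.zero_eq
    have hp := hR.overlap_antitone (Nat.zero_le (L - 1))
    simp only [sum_range_succ, range_zero, sum_empty, tsub_self] at *
    omega
  refine ⟨hb2, ?_, by omega⟩
  have hadd' := ht.removeStrip_add (b - 2)
  have hpart := ht.part_succ_add_le (b - 2)
  have hbot := ht.bot_pos hov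
  rw [show b - 2 + 1 = b - 1 by omega] at hadd' hpart
  omega

end IsReducingStrip

end Strips

section Words

open Finset

variable {a p l u w : List ℕ} {ov : ℕ → Bool} {ν t : ℕ → ℕ} {b c i j k m n x L : ℕ}

theorem antitone_getD (hl : l.Pairwise (· ≥ ·)) : Antitone fun i => l.getD i 0 := by
  intro i j hij
  rcases lt_or_ge j l.length with hj | hj
  · simp only [List.getD_eq_getElem _ _ hj, List.getD_eq_getElem _ _ (hij.trans_lt hj)]
    exact hl.rel_get_of_le (a := ⟨i, _⟩) (b := ⟨j, hj⟩) hij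
  · simp only [List.getD_eq_default _ _ hj, Nat.zero_le]

theorem exists_getD_eq_of_mem (hx : x ∈ l) : ∃ i < l.length, l.getD i 0 = x := by
  obtain ⟨i, hi, rfl⟩ := List.getElem_of_mem hx
  exact ⟨i, hi, List.getD_eq_getElem _ _ hi⟩

theorem getD_mem (hi : i < l.length) : l.getD i 0 ∈ l :=
  List.getD_eq_getElem l 0 hi ▸ List.getElem_mem hi

theorem getD_le_of_forall_mem_le (hl : ∀ x ∈ l, x ≤ c) (i : ℕ) : l.getD i 0 ≤ c := by
  rcases lt_or_ge i l.length with hi | hi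
  · exact hl _ (getD_mem hi)
  · simp only [List.getD_eq_default _ _ hi, Nat.zero_le]

theorem length_eq_sum_count_succ (hb : ∀ x ∈ l, x ≤ b) (h0 : l.count 0 = 0) :
    l.length = ∑ j ∈ range b, l.count (j + 1) := by
  have hsum := Multiset.sum_count_eq_card (s := range (b + 1)) (m := (l : Multiset ℕ))
    fun x hx => mem_range.2 (Nat.lt_succ_of_le (hb x hx))
  simpa [sum_range_succ', h0] using hsum.symm

theorem rowOffset_succ (a : List ℕ) (i : ℕ) :
    rowOffset a (i + 1) = rowOffset a i + a.getD i 0 := by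
  unfold rowOffset
  rw [List.take_add_one, List.sum_append, List.getD_eq_getElem?_getD]
  cases a[i]? <;> simp

theorem rowOffset_eq_sum (a : List ℕ) (i : ℕ) :
    rowOffset a i = ∑ k ∈ range i, a.getD k 0 := by
  induction i with
  | zero => rfl
  | succ i ih => rw [rowOffset_succ, ih, sum_range_succ]

theorem rowOffset_mono (a : List ℕ) : Monotone (rowOffset a) :=
  monotone_nat_of_le_succ fun i => rowOffset_succ a i ▸ Nat.le_add_right _ _

theorem rowOffset_length (a : List ℕ) : rowOffset a a.length = a.sum := by
  rw [rowOffset, List.take_length]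

theorem rowOffset_append_of_le_length (hi : i ≤ a.length) :
    rowOffset (a ++ l) i = rowOffset a i := by
  rw [rowOffset, List.take_append_of_le_length hi, rowOffset]

theorem IsYam.append (hw : IsYam w)
    (h : ∀ j, w.count (j + 2) + u.count (j + 2) ≤ w.count (j + 1)) : IsYam (w ++ u) := by
  intro k j
  rw [List.take_append, List.count_append, List.count_append]
  rcases le_or_gt k w.length with hk | hk
  · simpa [Nat.sub_eq_zero_of_le hk] using hw k j
  · rw [List.take_of_length_le hk.le]
    have := h j
    have := (List.take_sublist (k - w.length) u).count_le (j + 2)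
    omega

theorem IsRibbonWord.append_row (hw : IsRibbonWord a ov w) (ha : ∀ x ∈ a, 0 < x)
    (hu : u.Pairwise (· ≥ ·))
    (hgap : a ≠ [] → ov (a.length - 1) = true → w.getD (w.length - 1) 0 < u.getD 0 0) :
    IsRibbonWord (a ++ [u.length]) ov (w ++ u) := by
  obtain ⟨hlen, hrow, hcolumn⟩ := hw
  have hfull : rowOffset a a.length = w.length := by rw [rowOffset_length, hlen]
  have hle : ∀ i < a.length, rowOffset a i + a.getD i 0 ≤ w.length := fun i hi => by
    rw [← rowOffset_succ, ← hfull]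
    exact rowOffset_mono a hi
  have hpos : ∀ i < a.length, 0 < a.getD i 0 := fun i hi => ha _ (getD_mem hi)
  simp only [IsRibbonWord, List.length_append, List.length_singleton, List.sum_append,
    List.sum_singleton]
  refine ⟨by rw [hlen], fun i j hi hj => ?_, fun i hi hov => ?_⟩
  · rw [rowOffset_append_of_le_length (by omega)]
    rcases Nat.lt_succ_iff_lt_or_eq.1 hi with hia | rfl
    · rw [List.getD_append _ _ _ _ hia] at hj
      have := hle i hia
      rw [List.getD_append _ _ _ _ (by omega), List.getD_append _ _ _ _ (by omega)]
      exact hrow i j hia hj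
    · rw [hfull, List.getD_append_right _ _ _ _ (by omega),
        List.getD_append_right _ _ _ _ (by omega)]
      exact antitone_getD hu (by omega)
  · rw [rowOffset_append_of_le_length (by omega)]
    rcases Nat.lt_succ_iff_lt_or_eq.1 hi with hia | hia
    · have := hle (i + 1) hia
      have := hpos (i + 1) hia
      rw [List.getD_append _ _ _ _ (by omega), List.getD_append _ _ _ _ (by omega)]
      exact hcolumn i hia hov
    · have := hle i (by omega)
      have := hpos i (by omega)
      obtain rfl : i = a.length - 1 := by omega
      rw [hia, hfull, List.getD_append _ _ _ _ (by omega),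
        List.getD_append_right _ _ _ _ le_rfl, Nat.sub_self]
      exact hgap (List.ne_nil_of_length_pos (by omega)) hov

/-- `HasContent` with the content given as a function: the word `w` has `ν j` letters `j + 1`
for every `j`, and no other letters. -/
def HasCounts (w : List ℕ) (ν : ℕ → ℕ) : Prop :=
  (∀ j, w.count (j + 1) = ν j) ∧ w.count 0 = 0

theorem HasCounts.le_of_mem (hw : HasCounts w ν) (hν : ∀ j, b ≤ j → ν j = 0) (hx : x ∈ w) :
    x ≤ b := by
  by_contra! hbx
  obtain ⟨j, rfl⟩ := Nat.exists_eq_add_of_lt hbx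
  exact List.count_pos_iff.2 hx |>.ne' ((hw.1 _).trans (hν _ (Nat.le_add_right b j)))

theorem exists_pairwise_hasCounts (hν : ∀ j, b ≤ j → ν j = 0) :
    ∃ u : List ℕ, u.Pairwise (· ≥ ·) ∧ HasCounts u ν := by
  refine ⟨(∑ j ∈ range b, Multiset.replicate (ν j) (j + 1)).sort (· ≥ ·),
    Multiset.pairwise_sort _ _, fun j => ?_, ?_⟩
  · rw [← Multiset.coe_count, Multiset.sort_eq, Multiset.count_sum']
    simp only [Multiset.count_replicate, Nat.add_right_cancel_iff, sum_ite_eq', mem_range]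
    split_ifs with hj
    · rfl
    · exact (hν j (not_lt.1 hj)).symm
  · rw [← Multiset.coe_count, Multiset.sort_eq, Multiset.count_sum']
    simp [Multiset.count_replicate]

theorem IsHorizontalStrip.exists_row (ht : IsHorizontalStrip ν m t) (hν : ∀ j, b ≤ j → ν j = 0) :
    ∃ u : List ℕ, u.Pairwise (· ≥ ·) ∧ u.length = m ∧
      HasCounts u fun j => t j - t (j + 1) := by
  have hdiff : ∀ j, b ≤ j → t j - t (j + 1) = 0 := fun j hj => ht.sub_eq_zero (hν j hj)
  obtain ⟨u, hu, hcounts⟩ := exists_pairwise_hasCounts hdiff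
  refine ⟨u, hu, ?_, hcounts⟩
  rw [length_eq_sum_count_succ (fun x hx => hcounts.le_of_mem hdiff hx) hcounts.2,
    sum_congr rfl fun j _ => hcounts.1 j]
  have htelescope : ∀ n, ∑ j ∈ range n, (t j - t (j + 1)) + t n = m := fun n => by
    induction n with
    | zero => simp [ht.zero_eq]
    | succ n ih =>
      have := ht.succ_le n
      rw [sum_range_succ]
      omega
  have := htelescope b
  have := ht.le b
  have := hν b le_rfl
  omega

theorem IsHorizontalStrip.hasCounts_append (ht : IsHorizontalStrip ν m t)
    (hw : HasCounts w (removeStrip ν t)) (hu : HasCounts u fun j => t j - t (j + 1)) :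
    HasCounts (w ++ u) ν := by
  refine ⟨fun j => ?_, by rw [List.count_append, hw.2, hu.2]⟩
  have := ht.removeStrip_add j
  have := ht.succ_le j
  rw [List.count_append, hw.1, hu.1]
  lia

theorem IsHorizontalStrip.isYam_append (ht : IsHorizontalStrip ν m t) (hyam : IsYam w)
    (hw : HasCounts w (removeStrip ν t)) (hu : HasCounts u fun j => t j - t (j + 1)) :
    IsYam (w ++ u) := by
  refine hyam.append fun j => ?_
  have := ht.removeStrip_add j
  have := ht.part_succ_add_le j
  rw [← List.count_append, (ht.hasCounts_append hw hu).1 (j + 1), hw.1]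
  omega

theorem IsHorizontalStrip.getD_length_sub_one_lt (ht : IsHorizontalStrip ν m t)
    (hν : ∀ j, b ≤ j → ν j = 0) (hb : 0 < b) (hlt : t (b - 1) < m) (hu : u.Pairwise (· ≥ ·))
    (hlen : u.length = m) (hcounts : HasCounts u fun j => t j - t (j + 1)) :
    u.getD (u.length - 1) 0 < b := by
  obtain ⟨c, rfl⟩ := Nat.exists_eq_add_of_le' hb
  rw [Nat.add_sub_cancel] at hlt
  obtain ⟨x, hx, hne⟩ : ∃ x ∈ u, c + 1 ≠ x := by
    by_contra! hall
    have := List.count_eq_length.2 hall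
    have : u.count (c + 1) = t c - t (c + 1) := hcounts.1 c
    omega
  have hxc : x ≤ c + 1 := hcounts.le_of_mem (fun j hj => ht.sub_eq_zero (hν j hj)) hx
  obtain ⟨i, hi, rfl⟩ := exists_getD_eq_of_mem hx
  have := antitone_getD hu (show i ≤ u.length - 1 by omega)
  dsimp only at this
  omega

theorem IsReducingStrip.getD_length_sub_one_lt_getD_zero {a p : ℕ → ℕ} {N : ℕ}
    (hR : IsMonotoneRibbon a p N) (hL : L < N) (h : IsAdmissible a p (L + 1) b ν)
    (ht : IsReducingStrip a p L b ν t) (hov : p (L - 1) = p L + 1)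
    (hw : HasCounts w (removeStrip ν t))
    (hlast : HasSlack a p L (remainingLength ν t b) (removeStrip ν t) →
      w.getD (w.length - 1) 0 < remainingLength ν t b)
    (hu : u.Pairwise (· ≥ ·)) (hcounts : HasCounts u fun j => t j - t (j + 1)) :
    w.getD (w.length - 1) 0 < u.getD 0 0 := by
  obtain ⟨c, rfl⟩ := Nat.exists_eq_add_of_le' (h.pos hR hL)
  have hred := ht.isAdmissible_removeStrip hR hL h
  have hslack := ht.hasSlack_removeStrip hR hL h hov
  have hpos := ht.bot_pos hov
  have hnext : t (c + 1) ≤ 0 := h.eq_zero_of_le le_rfl ▸ ht.le (c + 1)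
  unfold remainingLength at hlast hred
  rw [Nat.add_sub_cancel] at hslack hpos hlast hred
  have hmem : c + 1 ∈ u := List.count_pos_iff.1 (by rw [hcounts.1]; lia)
  have hhead : c + 1 ≤ u.getD 0 0 := by
    obtain ⟨i, -, hi⟩ := exists_getD_eq_of_mem hmem
    exact hi ▸ antitone_getD hu i.zero_le
  refine lt_of_lt_of_le ?_ hhead
  split_ifs at hlast hred with hlt
  · exact hlast (hslack hlt)
  · exact Nat.lt_succ_of_le <| getD_le_of_forall_mem_le
      (fun x hx => hw.le_of_mem (fun j hj => hred.eq_zero_of_le hj) hx) _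

theorem exists_isRibbonWord
    (hR : IsMonotoneRibbon (fun i => a.getD i 0) (fun i => p.getD i 0) a.length)
    (hn : n ≤ a.length)
    (h : IsAdmissible (fun i => a.getD i 0) (fun i => p.getD i 0) n b ν) :
    ∃ w, IsRibbonWord (a.take n) (ovOf p) w ∧ IsYam w ∧ HasCounts w ν ∧
      (HasSlack (fun i => a.getD i 0) (fun i => p.getD i 0) n b ν →
        w.getD (w.length - 1) 0 < b) := by
  induction n generalizing b ν with
  | zero =>
    have hb := h.length_le
    refine ⟨[], by simp [IsRibbonWord], fun k j => by simp, ⟨fun j => ?_, rfl⟩, fun hs => ?_⟩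
    · rw [h.eq_zero_of_le (by omega), List.count_nil]
    · have := hs.two_le
      omega
  | succ L ih =>
    obtain ⟨t, ht, hslack⟩ := h.exists_isReducingStrip hR hn
    obtain ⟨w, hw, hyam, hcounts, hlast⟩ :=
      ih (Nat.le_of_succ_le hn) (ht.isAdmissible_removeStrip hR hn h)
    obtain ⟨u, hu, hlen, hucounts⟩ := ht.exists_row fun j hj => h.eq_zero_of_le hj
    have htake : a.take (L + 1) = a.take L ++ [u.length] := by
      rw [hlen, List.take_succ_eq_append_getElem hn, List.getD_eq_getElem]
    have hlenL : (a.take L).length = L := List.length_take_of_le (Nat.le_of_succ_le hn)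
    refine ⟨w ++ u, ?_, ht.isYam_append hyam hcounts hucounts,
      ht.hasCounts_append hcounts hucounts, fun hs => ?_⟩
    · rw [htake]
      refine hw.append_row (fun x hx => ?_) hu fun hne hov => ?_
      · obtain ⟨i, hi, rfl⟩ := exists_getD_eq_of_mem (List.mem_of_mem_take hx)
        exact two_pos.trans_le (hR.two_le i hi)
      · have hL := hlenL ▸ List.length_pos_of_ne_nil hne
        rw [hlenL, ovOf, decide_eq_true_eq, Nat.sub_add_cancel hL] at hov
        exact ht.getD_length_sub_one_lt_getD_zero hR hn h hov hcounts hlast hu hucounts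
    · have hupos : 0 < u.length := hlen ▸ two_pos.trans_le (hR.two_le L hn)
      rw [List.length_append, List.getD_append_right _ _ _ _ (by omega),
        Nat.sub_right_comm, Nat.add_sub_cancel_left]
      exact ht.getD_length_sub_one_lt (fun j hj => h.eq_zero_of_le hj) (h.pos hR hn)
        (hslack hs) hu hlen hucounts

theorem IsYam.getD_le (hw : IsYam w) (hk : ∀ x ∈ w.take k, x ≤ c) : w.getD k 0 ≤ c + 1 := by
  by_contra! hlt
  have hkw : k < w.length := by
    by_contra hge
    rw [List.getD_eq_default _ _ (not_lt.1 hge)] at hlt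
    omega
  obtain ⟨d, hd⟩ := Nat.exists_eq_add_of_le' (show c + 2 ≤ w.getD k 0 from hlt)
  have hyam := hw (k + 1) (c + d)
  have htake : w.take (k + 1) = w.take k ++ [c + d + 2] := by
    rw [List.take_succ_eq_append_getElem hkw, ← List.getD_eq_getElem w 0 hkw, hd]
    congr 2
    omega
  have hmem : c + d + 1 ∈ w.take k := List.count_pos_iff.1 (by
    simp only [htake, List.count_append, List.count_singleton_self] at hyam
    simp only [List.count_singleton, beq_iff_eq] at hyam
    split_ifs at hyam <;> omega)
  have := hk _ hmem
  omega

theorem IsRibbonWord.getD_rowOffset_add_le (hw : IsRibbonWord a ov w) (hi : i < a.length)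
    (hj : j < a.getD i 0) : w.getD (rowOffset a i + j) 0 ≤ w.getD (rowOffset a i) 0 := by
  induction j with
  | zero => rfl
  | succ j ih => exact (hw.2.1 i j hi hj).trans (ih (Nat.lt_of_succ_lt hj))

theorem IsRibbonWord.le_of_mem_take_rowOffset (hw : IsRibbonWord a ov w) (hyam : IsYam w)
    (hi : i ≤ a.length) : ∀ x ∈ w.take (rowOffset a i), x ≤ i := by
  induction i with
  | zero => simp [rowOffset]
  | succ i ih =>
    intro x hx
    obtain ⟨n, hn, rfl⟩ := List.mem_take_iff_getElem.1 hx
    rw [lt_min_iff] at hn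
    rw [← List.getD_eq_getElem w 0 hn.2]
    have ih := ih (Nat.le_of_succ_le hi)
    rcases lt_or_ge n (rowOffset a i) with hlt | hge
    · have := ih _ (List.mem_take_iff_getElem.2 ⟨n, lt_min hlt hn.2, rfl⟩)
      rw [List.getD_eq_getElem w 0 hn.2]
      omega
    · obtain ⟨j, rfl⟩ := Nat.exists_eq_add_of_le hge
      rw [rowOffset_succ] at hn
      exact (hw.getD_rowOffset_add_le hi (by omega)).trans (hyam.getD_le ih)

theorem count_add_card_getD_ne (l : List ℕ) (x : ℕ) :
    l.count x + #{k ∈ range l.length | l.getD k 0 ≠ x} = l.length := by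
  rw [card_filter]
  induction l with
  | nil => rfl
  | cons y l ih =>
    simp only [List.length_cons, sum_range_succ', List.getD_cons_succ, List.getD_cons_zero,
      List.count_cons, beq_iff_eq, ne_eq] at ih ⊢
    split_ifs <;> omega

theorem count_drop_add_card_getD_ne (l : List ℕ) (n x : ℕ) :
    (l.drop n).count x + #{k ∈ Ico n l.length | l.getD k 0 ≠ x} = l.length - n := by
  have := count_add_card_getD_ne (l.drop n) x
  rw [card_filter] at this ⊢
  simpa only [sum_Ico_eq_sum_range, List.length_drop, List.getD_eq_getElem?_getD,
    List.getElem?_drop] using this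

-- Each overlapping gap `k` is matched with a box of its two-box column that does not contain `x`:
-- the first box of row `k + 1`, or the last box of row `k` if the former contains `x`.
theorem IsRibbonWord.count_drop_add_card_le (hw : IsRibbonWord a ov w) (ha : PartsGE a 2)
    (i x : ℕ) :
    (w.drop (rowOffset a i)).count x + #{k ∈ Ico i (a.length - 1) | ov k} ≤
      (a.drop i).sum := by
  have hstep : ∀ k < a.length, rowOffset a k + 2 ≤ rowOffset a (k + 1) := fun k hk => by
    rw [rowOffset_succ]
    exact Nat.add_le_add_left (ha _ (getD_mem hk)) _
  have hlen : (a.drop i).sum = w.length - rowOffset a i := by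
    have := List.sum_take_add_sum_drop a i
    rw [hw.1, rowOffset]
    omega
  rw [hlen, ← count_drop_add_card_getD_ne w (rowOffset a i) x, add_le_add_iff_left]
  let f : ℕ → ℕ := fun k =>
    if w.getD (rowOffset a (k + 1)) 0 = x then rowOffset a (k + 1) - 1 else rowOffset a (k + 1)
  have hf : ∀ k < a.length, rowOffset a k < f k ∧ f k ≤ rowOffset a (k + 1) := fun k hk => by
    have := hstep k hk
    dsimp only [f]
    split_ifs <;> omega
  have hf_mono : StrictMonoOn f {k | k < a.length} := fun k hk k' hk' hkk' =>
    (hf k hk).2.trans_lt ((rowOffset_mono a hkk').trans_lt (hf k' hk').1)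
  refine card_le_card_of_injOn f (fun k hk => ?_) (hf_mono.injOn.mono fun k hk => ?_)
  · simp only [coe_filter, Set.mem_ofPred_eq, mem_Ico] at hk ⊢
    obtain ⟨⟨hik, hk⟩, hov⟩ := hk
    have := hf k (by omega)
    have := hstep (k + 1) (by omega)
    have := rowOffset_mono a hik
    have := rowOffset_length a ▸ rowOffset_mono a (show k + 1 + 1 ≤ a.length by omega)
    have hlt := hw.2.2 k (by omega) hov
    refine ⟨⟨by omega, by rw [hw.1]; omega⟩, ?_⟩
    dsimp only [f]
    split_ifs with hx
    · exact (hx ▸ hlt).ne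
    · exact hx
  · simp only [coe_filter, Set.mem_ofPred_eq, mem_Ico] at hk ⊢
    omega

theorem IsOverlapSeq.getD_eq_zero (hp : IsOverlapSeq a p) (hi : a.length ≤ i + 1) :
    p.getD i 0 = 0 := by
  rcases lt_or_ge i a.length with hlt | hge
  · obtain rfl : i = a.length - 1 := by omega
    exact hp.2.1
  · exact List.getD_eq_default _ _ (hp.1 ▸ hge)

theorem IsOverlapSeq.step (hp : IsOverlapSeq a p) (i : ℕ) :
    p.getD i 0 = p.getD (i + 1) 0 ∨ p.getD i 0 = p.getD (i + 1) 0 + 1 := by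
  rcases lt_or_ge (i + 1) a.length with hi | hi
  · exact hp.2.2 i hi
  · exact Or.inl ((hp.getD_eq_zero hi).trans (hp.getD_eq_zero (by omega)).symm)

theorem IsOverlapSeq.isMonotoneRibbon (hp : IsOverlapSeq a p) (ha : IsPartition a)
    (h2 : PartsGE a 2) :
    IsMonotoneRibbon (fun i => a.getD i 0) (fun i => p.getD i 0) a.length where
  antitone := antitone_getD ha.1
  two_le _ hi := h2 _ (getD_mem hi)
  step := hp.step

theorem IsOverlapSeq.card_ovOf_add (hp : IsOverlapSeq a p) (hin : i ≤ n) :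
    #{k ∈ Ico i n | ovOf p k} + p.getD n 0 = p.getD i 0 := by
  induction n, hin using Nat.le_induction with
  | base => simp
  | succ n hin ih =>
    have := hp.step n
    simp only [card_filter, sum_Ico_succ_top hin, ovOf, decide_eq_true_eq] at ih ⊢
    split_ifs <;> omega

theorem IsOverlapSeq.card_ovOf (hp : IsOverlapSeq a p) (i : ℕ) :
    #{k ∈ Ico i (a.length - 1) | ovOf p k} = p.getD i 0 := by
  rcases le_or_gt i (a.length - 1) with hi | hi
  · rw [← hp.card_ovOf_add hi, hp.2.1, add_zero]
  · rw [Ico_eq_empty_of_le hi.le, hp.getD_eq_zero (by omega), filter_empty, card_empty]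

theorem IsOverlapSeq.getD_le_sum_drop (hp : IsOverlapSeq a p) (ha : ∀ x ∈ a, 0 < x) (i : ℕ) :
    p.getD i 0 ≤ (a.drop i).sum := by
  have hlen := List.length_le_sum_of_one_le (a.drop i) fun x hx => ha x (List.mem_of_mem_drop hx)
  have hcard := (hp.card_ovOf i).symm.trans_le (card_filter_le _ _)
  rw [List.length_drop] at hlen
  rw [Nat.card_Ico] at hcard
  omega

theorem getD_eq_zero_of_lenp_le (hp : Antitone fun i => p.getD i 0) (hi : lenp p ≤ i) :
    p.getD i 0 = 0 := by
  by_contra hne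
  have hip : i < p.length := by
    by_contra! hle
    exact hne (List.getD_eq_default _ _ hle)
  have hcount : (p.take (i + 1)).countP (fun x => decide (x ≠ 0)) = i + 1 := by
    refine (List.countP_eq_length.2 fun x hx => ?_).trans (List.length_take_of_le hip)
    obtain ⟨k, hk, rfl⟩ := List.mem_take_iff_getElem.1 hx
    rw [lt_min_iff] at hk
    have := hp (Nat.le_of_lt_succ hk.1)
    dsimp only at this
    rw [← List.getD_eq_getElem p 0 hk.2, decide_eq_true_eq]
    omega
  have := hcount ▸ (List.take_sublist (i + 1) p).countP_le
  rw [← lenp] at this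
  omega

theorem HasContent.length_eq_sum {nu : List ℕ} (hw : HasContent w nu) : w.length = nu.sum := by
  have hnu : ∀ j, nu.length ≤ j → nu.getD j 0 = 0 := fun j hj => List.getD_eq_default _ _ hj
  rw [length_eq_sum_count_succ (fun x hx => HasCounts.le_of_mem hw hnu hx) hw.2,
    sum_congr rfl fun j _ => hw.1 j, ← rowOffset_eq_sum, rowOffset_length]

theorem IsRibbonWord.domLE {nu : List ℕ} (hw : IsRibbonWord a ov w) (hyam : IsYam w)
    (hnu : HasContent w nu) : DomLE a nu := by
  have hdom : ∀ i ≤ a.length, rowOffset a i ≤ rowOffset nu i := fun i hi => by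
    have hlen : (w.take (rowOffset a i)).length = rowOffset a i :=
      List.length_take_of_le (hw.1 ▸ rowOffset_length a ▸ rowOffset_mono a hi)
    have hzero : (w.take (rowOffset a i)).count 0 = 0 :=
      Nat.eq_zero_of_le_zero (((List.take_sublist _ w).count_le 0).trans_eq hnu.2)
    rw [← hlen, length_eq_sum_count_succ (hw.le_of_mem_take_rowOffset hyam hi) hzero,
      rowOffset_eq_sum nu]
    exact sum_le_sum fun j _ => hnu.1 j ▸ (List.take_sublist _ w).count_le _
  refine ⟨hw.1.symm.trans hnu.length_eq_sum, fun i => ?_⟩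
  rcases le_total i a.length with hi | hi
  · exact hdom i hi
  · rw [List.take_of_length_le hi, ← rowOffset_length]
    exact (hdom _ le_rfl).trans (rowOffset_mono nu hi)

theorem IsRibbonWord.count_succ_add_card_le (hw : IsRibbonWord a ov w) (hyam : IsYam w)
    (ha : PartsGE a 2) (hi : i ≤ a.length) :
    w.count (i + 1) + #{k ∈ Ico i (a.length - 1) | ov k} ≤ (a.drop i).sum := by
  have hzero : (w.take (rowOffset a i)).count (i + 1) = 0 := List.count_eq_zero.2 fun hmem =>
    (hw.le_of_mem_take_rowOffset hyam hi _ hmem).not_gt (Nat.lt_succ_self i)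
  rw [← List.take_append_drop (rowOffset a i) w, List.count_append, hzero, zero_add]
  exact hw.count_drop_add_card_le ha i (i + 1)

theorem DomLE.length_le {nu : List ℕ} (h : DomLE a nu) (hnu : ∀ x ∈ nu, 0 < x) :
    nu.length ≤ a.length := by
  by_contra! hlt
  have hdom := h.2 a.length
  have hpos := hnu _ (getD_mem hlt)
  have hmono := rowOffset_mono nu hlt
  rw [List.take_length, h.1] at hdom
  rw [rowOffset_length, Nat.succ_eq_add_one, rowOffset_succ, rowOffset] at hmono
  omega

theorem DomLE.getD_le_sum_drop {nu : List ℕ} (h : DomLE a nu) (i : ℕ) :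
    nu.getD i 0 ≤ (a.drop i).sum := by
  have ha := List.sum_take_add_sum_drop a i
  have hnu := List.sum_take_add_sum_drop nu (i + 1)
  have hsucc := rowOffset_succ nu i
  have := h.1
  have := h.2 i
  unfold rowOffset at hsucc
  omega

theorem DomLE.isAdmissible {nu : List ℕ} (h : DomLE a nu) (hnu : IsPartition nu)
    (hcol : ∀ i, nu.getD i 0 + p.getD i 0 ≤ (a.drop i).sum) :
    IsAdmissible (fun i => a.getD i 0) (fun i => p.getD i 0) a.length nu.length
      fun i => nu.getD i 0 where
  antitone := antitone_getD hnu.1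
  pos_iff j := by
    refine ⟨fun hj => ?_, fun hj => hnu.2 _ (getD_mem hj)⟩
    by_contra! hle
    exact hj.ne' (List.getD_eq_default _ _ hle)
  length_le := h.length_le hnu.2
  sum_eq := by
    rw [← rowOffset_eq_sum, ← rowOffset_eq_sum, rowOffset_length, h.1, rowOffset,
      List.take_of_length_le (h.length_le hnu.2)]
  dom j _ := by
    rw [← rowOffset_eq_sum, ← rowOffset_eq_sum]
    exact h.2 j
  col j _ := by
    have := hcol j
    have := List.sum_take_add_sum_drop a j
    rw [← rowOffset_eq_sum, ← rowOffset_eq_sum, rowOffset_length, rowOffset]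
    omega

theorem inSupport_iff {nu : List ℕ} (ha : IsPartition a) (h2 : PartsGE a 2)
    (hp : IsOverlapSeq a p) (hnu : IsPartition nu) :
    InSupport a p nu ↔
      DomLE a nu ∧ ∀ i, nu.getD i 0 + p.getD i 0 ≤ (a.drop i).sum := by
  constructor
  · rintro ⟨w, hw, hyam, hcontent⟩
    have hdom := hw.domLE hyam hcontent
    refine ⟨hdom, fun i => ?_⟩
    rcases le_or_gt i a.length with hi | hi
    · rw [← hcontent.1 i, ← hp.card_ovOf i]
      exact hw.count_succ_add_card_le hyam h2 hi
    · rw [hp.getD_eq_zero (by omega), add_zero]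
      exact hdom.getD_le_sum_drop i
  · rintro ⟨hdom, hcol⟩
    obtain ⟨w, hw, hyam, hcontent, -⟩ := exists_isRibbonWord (hp.isMonotoneRibbon ha h2) le_rfl
      (hdom.isAdmissible hnu hcol)
    rw [List.take_length] at hw
    exact ⟨w, hw, hyam, hcontent⟩

theorem inInterval_iff {nu : List ℕ} (hp : p.getD 0 0 ≤ a.sum) :
    InInterval a p nu ↔ DomLE a nu ∧ nu.getD 0 0 + p.getD 0 0 ≤ a.sum := by
  refine and_congr_right fun hdom => ?_
  have hone : ∀ l : List ℕ, (l.take 1).sum = l.getD 0 0 := fun l => by cases l <;> simp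
  have hsum : [a.sum - p.getD 0 0, p.getD 0 0].sum = nu.sum := by
    rw [← hdom.1, List.sum_pair, Nat.sub_add_cancel hp]
  constructor
  · rintro ⟨-, hle⟩
    have := hle 1
    rw [hone, hone, List.getD_cons_zero] at this
    omega
  · refine fun hle => ⟨hsum.symm, fun i => ?_⟩
    match i with
    | 0 => rfl
    | 1 =>
      rw [hone, hone, List.getD_cons_zero]
      omega
    | i + 2 =>
      rw [List.take_of_length_le (l := [_, _]) (Nat.le_add_left 2 i), hsum,
        ← List.sum_take_add_sum_drop nu (i + 2)]
      exact Nat.le_add_right _ _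

theorem inSupport_iff_inInterval_and {nu : List ℕ} (ha : IsPartition a) (h2 : PartsGE a 2)
    (hp : IsOverlapSeq a p) (hnu : IsPartition nu) :
    InSupport a p nu ↔ InInterval a p nu ∧
      ∀ i, 1 ≤ i → i + 1 ≤ lenp p → nu.getD i 0 + p.getD i 0 ≤ (a.drop i).sum := by
  rw [inSupport_iff ha h2 hp hnu, inInterval_iff (a := a) (hp.getD_le_sum_drop ha.2 0), and_assoc]
  refine and_congr_right fun hdom => ⟨fun h => ⟨h 0, fun i _ _ => h i⟩, fun ⟨h0, h⟩ i => ?_⟩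
  rcases Nat.eq_zero_or_pos i with rfl | hi
  · exact h0
  rcases lt_or_ge i (lenp p) with hip | hip
  · exact h i hi hip
  · rw [getD_eq_zero_of_lenp_le (hp.isMonotoneRibbon ha h2).overlap_antitone hip, add_zero]
    exact hdom.getD_le_sum_drop i

end Words

/-- Corollary `char`: if `ℓ(p) ≤ 1` then `R_a^p` has full Schur support;
and if `ℓ(p) ≥ 2`, then a partition `nu` of the Schur interval fails to lie in the support of
`R_a^p` iff `ν_{i+1} ≥ ϱ_i = Σ_{q=i+1}^{ℓ(a)} a_q − p_{i+1} + 1` for some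
`i ∈ {1,…,ℓ(p)−1}`, equivalently iff `ν_{i+1}` exceeds the number
`Σ_{q=i+1}^{ℓ(a)} a_q − p_{i+1}` of columns of the last `ℓ(a)−i` rows of `R_a^p` for some
such `i`. -/
theorem not_in_support_characterization
    (a p : List ℕ) (ha : IsPartition a) (h2 : PartsGE a 2) (hp : IsOverlapSeq a p) :
    (lenp p ≤ 1 → FullSupport a p) ∧
    (2 ≤ lenp p → ∀ nu : List ℕ, IsPartition nu → InInterval a p nu →
      ((¬ InSupport a p nu ↔
          ∃ i, 1 ≤ i ∧ i + 1 ≤ lenp p ∧ rho a p i ≤ nu.getD i 0) ∧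
       (¬ InSupport a p nu ↔
          ∃ i, 1 ≤ i ∧ i + 1 ≤ lenp p ∧ (a.drop i).sum - p.getD i 0 < nu.getD i 0))) := by
  refine ⟨fun hlen => ?_, fun _ nu hnu hint => ?_⟩
  · ext nu
    refine and_congr_right fun hnu => ?_
    rw [inSupport_iff_inInterval_and ha h2 hp hnu]
    exact and_iff_left fun i hi hi' => by omega
  · have hnot : ¬ InSupport a p nu ↔ ∃ i, 1 ≤ i ∧ i + 1 ≤ lenp p ∧
        (a.drop i).sum < nu.getD i 0 + p.getD i 0 := by
      rw [inSupport_iff_inInterval_and ha h2 hp hnu, and_iff_right hint]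
      push Not
      rfl
    rw [hnot]
    have hcols := hp.getD_le_sum_drop ha.2
    constructor <;>
      refine exists_congr fun i => and_congr_right fun _ => and_congr_right fun _ => ?_
    · unfold rho
      omega
    · have := hcols i
      omega

end RibbonSupport
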